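/- Let (X, d, T) be a topological dynamical system. Then the upper metric mean dimension satisfies mdim̄_M(X,d,T) = limsup_{ε→0} (1/log(1/ε)) · sup_{μ ∈ E_T(X)} h_μ^{BK}(ε), where h_μ^{BK}(ε) denotes the μ-essential supremum of x ↦ h_μ^{BK}(x,ε) (this function is μ-a.e. constant for ergodic μ). -/

import Mathlib

open Filter MeasureTheory Set Topology

variable {X : Type*}

/-- The dynamical (Bowen) metric `d_n(x,y) = max_{0 ≤ k ≤ n-1} d(T^k x, T^k y)`. -/
noncomputable def dynDist [MetricSpace X] (T : X → X) (n : ℕ) (x y : X) : ℝ :=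
  ⨆ k ∈ Finset.range n, dist (T^[k] x) (T^[k] y)

/-- The open dynamical ball `B_n(x, ε) = {y : d_n(x,y) < ε}`. -/
def dynBall [MetricSpace X] (T : X → X) (n : ℕ) (x : X) (ε : ℝ) : Set X :=
  {y | dynDist T n x y < ε}

/-- `s_n(K, ε)`: the maximal cardinality of an `(n,ε)`-separated subset of `K`. -/
noncomputable def sepNum [MetricSpace X] (T : X → X) (n : ℕ) (K : Set X) (ε : ℝ) : ℕ :=
  sSup {m | ∃ E : Finset X, ↑E ⊆ K ∧
    (∀ x ∈ E, ∀ y ∈ E, x ≠ y → ε < dynDist T n x y) ∧ E.card = m}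

/-- `S(K, ε) = limsup_n (1/n) log s_n(K, ε)`. -/
noncomputable def sepEnt [MetricSpace X] (T : X → X) (K : Set X) (ε : ℝ) : EReal :=
  limsup (fun n : ℕ => ((Real.log (sepNum T n K ε) / n : ℝ) : EReal)) atTop

/-- `r_n(K, ε)`: the minimal cardinality of an `(n,ε)`-spanning set for `K`. -/
noncomputable def spanNum [MetricSpace X] (T : X → X) (n : ℕ) (K : Set X) (ε : ℝ) : ℕ :=
  sInf {m | ∃ F : Finset X, (∀ x ∈ K, ∃ y ∈ F, dynDist T n x y ≤ ε) ∧ F.card = m}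

/-- `R(K, ε) = limsup_n (1/n) log r_n(K, ε)`. -/
noncomputable def spanEnt [MetricSpace X] (T : X → X) (K : Set X) (ε : ℝ) : EReal :=
  limsup (fun n : ℕ => ((Real.log (spanNum T n K ε) / n : ℝ) : EReal)) atTop

/-- Upper metric mean dimension. -/
noncomputable def mdimUpper [MetricSpace X] (T : X → X) : EReal :=
  limsup (fun ε : ℝ => sepEnt T univ ε / ((Real.log (1 / ε) : ℝ) : EReal)) (𝓝[>] (0:ℝ))

/-- Lower metric mean dimension. -/
noncomputable def mdimLower [MetricSpace X] (T : X → X) : EReal :=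
  liminf (fun ε : ℝ => sepEnt T univ ε / ((Real.log (1 / ε) : ℝ) : EReal)) (𝓝[>] (0:ℝ))

/-- The ergodic `T`-invariant Borel probability measures. -/
def ergodicMeasures [MeasurableSpace X] (T : X → X) : Set (Measure X) :=
  {μ | IsProbabilityMeasure μ ∧ Ergodic T μ}

/-- `U` is a finite open cover of `X`. -/
def IsFiniteOpenCover [TopologicalSpace X] (U : Finset (Set X)) : Prop :=
  (∀ V ∈ U, IsOpen V) ∧ ⋃₀ (U : Set (Set X)) = univ

/-- The cover `U^n = ⋁_{i=0}^{n-1} T^{-i} U`. -/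
def dynRefine (T : X → X) (U : Finset (Set X)) (n : ℕ) : Set (Set X) :=
  {V | ∃ f : Fin n → Set X, (∀ i, f i ∈ U) ∧ V = ⋂ i : Fin n, T^[(i : ℕ)] ⁻¹' f i}

/-- `N(C)`: the minimal cardinality of a subcover of `C`. -/
noncomputable def coverNum (C : Set (Set X)) : ℕ :=
  sInf {m | ∃ F : Finset (Set X), ↑F ⊆ C ∧ ⋃₀ (F : Set (Set X)) = univ ∧ F.card = m}

/-- `N_μ(U^n, δ)`: minimal number of members of `U^n` needed to cover a set of measure ≥ δ. -/
noncomputable def shapiraNum [MeasurableSpace X] (T : X → X) (μ : Measure X)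
    (U : Finset (Set X)) (n : ℕ) (δ : ℝ) : ℕ :=
  sInf {m | ∃ F : Finset (Set X), ↑F ⊆ dynRefine T U n ∧
    ENNReal.ofReal δ ≤ μ (⋃₀ (F : Set (Set X))) ∧ F.card = m}

/-- Shapira's entropy `h_μ^S(U, δ) = limsup_n (1/n) log N_μ(U^n, δ)`. -/
noncomputable def shapiraEnt [MeasurableSpace X] (T : X → X) (μ : Measure X)
    (U : Finset (Set X)) (δ : ℝ) : EReal :=
  limsup (fun n : ℕ => ((Real.log (shapiraNum T μ U n δ) / n : ℝ) : EReal)) atTop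

/-- `N_μ^δ(n, ε)`: smallest number of open `(n,ε)`-dynamical balls whose union has
measure `> δ`. -/
noncomputable def katokNum [MetricSpace X] [MeasurableSpace X] (T : X → X) (μ : Measure X)
    (n : ℕ) (ε δ : ℝ) : ℕ :=
  sInf {m | ∃ F : Finset X, ENNReal.ofReal δ < μ (⋃ x ∈ F, dynBall T n x ε) ∧ F.card = m}

/-- Katok's entropy `h_μ^K(ε, δ) = limsup_n (1/n) log N_μ^δ(n, ε)`. -/
noncomputable def katokEnt [MetricSpace X] [MeasurableSpace X] (T : X → X) (μ : Measure X)
    (ε δ : ℝ) : EReal :=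
  limsup (fun n : ℕ => ((Real.log (katokNum T μ n ε δ) / n : ℝ) : EReal)) atTop

/-- Lower Katok entropy `h̲_μ^K(ε, δ) = liminf_n (1/n) log N_μ^δ(n, ε)`. -/
noncomputable def katokEntLower [MetricSpace X] [MeasurableSpace X] (T : X → X) (μ : Measure X)
    (ε δ : ℝ) : EReal :=
  liminf (fun n : ℕ => ((Real.log (katokNum T μ n ε δ) / n : ℝ) : EReal)) atTop

/-- `Ñ_μ^δ(n, ε)`: smallest number of sets of `d_n`-diameter ≤ ε whose union has
measure `> δ`. -/
noncomputable def katokNumTilde [MetricSpace X] [MeasurableSpace X] (T : X → X) (μ : Measure X)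
    (n : ℕ) (ε δ : ℝ) : ℕ :=
  sInf {m | ∃ F : Finset (Set X), (∀ A ∈ F, ∀ x ∈ A, ∀ y ∈ A, dynDist T n x y ≤ ε) ∧
    ENNReal.ofReal δ < μ (⋃₀ (F : Set (Set X))) ∧ F.card = m}

/-- Brin–Katok local entropy `h_μ^{BK}(x, ε) = limsup_n -(1/n) log μ(B_n(x, ε))`. -/
noncomputable def brinKatok [MetricSpace X] [MeasurableSpace X] (T : X → X) (μ : Measure X)
    (x : X) (ε : ℝ) : EReal :=
  limsup (fun n : ℕ => -(ENNReal.log (μ (dynBall T n x ε))) / (n : EReal)) atTop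

/-- Lower Brin–Katok local entropy `h̲_μ^{BK}(x, ε) = liminf_n -(1/n) log μ(B_n(x, ε))`. -/
noncomputable def brinKatokLower [MetricSpace X] [MeasurableSpace X] (T : X → X) (μ : Measure X)
    (x : X) (ε : ℝ) : EReal :=
  liminf (fun n : ℕ => -(ENNReal.log (μ (dynBall T n x ε))) / (n : EReal)) atTop

/-- Local entropy function `h_d(x, ε) = inf { S(K, ε) : K closed neighborhood of x }`. -/
noncomputable def locEnt [MetricSpace X] (T : X → X) (x : X) (ε : ℝ) : EReal :=
  ⨅ K ∈ {K : Set X | IsClosed K ∧ K ∈ 𝓝 x}, sepEnt T K ε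

/-- Local spanning entropy `h̃_d(x, ε) = inf { R(K, ε) : K closed neighborhood of x }`. -/
noncomputable def locSpanEnt [MetricSpace X] (T : X → X) (x : X) (ε : ℝ) : EReal :=
  ⨅ K ∈ {K : Set X | IsClosed K ∧ K ∈ 𝓝 x}, spanEnt T K ε

/-- `U_x^n`: the union of all cells of `U^n` containing `x`. -/
def dynCoverCell (T : X → X) (U : Finset (Set X)) (n : ℕ) (x : X) : Set X :=
  ⋃₀ {V | V ∈ dynRefine T U n ∧ x ∈ V}

/-!
The two sides are compared scale by scale. A maximal `(n, ρ)`-separated set has `s_n(X, ρ)` points,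
so the set of points whose `n`-ball of radius `ε > 2ρ` is much lighter than `1 / s_n(X, ρ)` has
exponentially small measure; Borel–Cantelli then bounds the local entropy at scale `ε` by
`S(X, ρ)`.

For the converse, suppose that the local entropies of all ergodic measures at scale `ε` are below
`s`. Most of the mass of an ergodic measure is then covered by about `exp (s n)` sets of small
`d_n`-diameter, and by compactness of the space of measures countably many such sets serve all
ergodic measures. Replacing each of them by a set of long orbit segments that mostly follow it makes
the segment lengths satisfy a Kraft inequality. The sets of orbit segments act as tiles: an ergodic
measure maximizing the mass of a closed set shows that, for finitely many tiles, the fraction of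
time an orbit spends off the tiles is uniformly small. Cutting orbits greedily along the tiles
gives `S(X, 4ε) ≤ s` up to an arbitrarily small error.
-/

section VisitCount

variable {T : X → X} {Z : Set X} {n : ℕ} {x : X}

/-- The number of visits of `x` to `Z` before time `n`, as a Birkhoff sum. -/
noncomputable def visitCount (T : X → X) (Z : Set X) (n : ℕ) (x : X) : ℕ :=
  birkhoffSum T (Z.indicator 1) n x

theorem visitCount_add (T : X → X) (Z : Set X) (m n : ℕ) (x : X) :
    visitCount T Z (m + n) x = visitCount T Z m x + visitCount T Z n (T^[m] x) :=
  birkhoffSum_add T _ m n x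

theorem visitCount_succ_of_mem (hx : x ∈ Z) :
    visitCount T Z (n + 1) x = visitCount T Z n (T x) + 1 := by
  rw [visitCount, birkhoffSum_succ', indicator_of_mem hx, Pi.one_apply, add_comm, visitCount]

theorem visitCount_mono {Z' : Set X} (h : Z ⊆ Z') : visitCount T Z n x ≤ visitCount T Z' n x := by
  unfold visitCount birkhoffSum
  gcongr

theorem natCast_visitCount (T : X → X) (Z : Set X) (n : ℕ) (x : X) :
    (visitCount T Z n x : ENNReal) = ∑ k ∈ Finset.range n, Z.indicator 1 (T^[k] x) := by
  rw [visitCount, birkhoffSum, Nat.cast_sum]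
  congr! 1 with k
  by_cases h : T^[k] x ∈ Z <;> simp [h]

theorem isOpen_setOf_visitCount_le [TopologicalSpace X] (hT : Continuous T) (hZ : IsClosed Z)
    (n b : ℕ) : IsOpen {x | visitCount T Z n x ≤ b} := by
  have husc : UpperSemicontinuous fun x => visitCount T Z n x := by
    unfold visitCount birkhoffSum
    exact upperSemicontinuous_sum fun k _ =>
      (hZ.upperSemicontinuous_indicator zero_le_one).comp (hT.iterate k)
  simpa only [preimage, mem_Iio, Nat.lt_succ_iff] using husc.isOpen_preimage (b + 1)

end VisitCount

/-- `Y` is covered by at most `r` sets of `d_n`-diameter at most `ρ`. Sets of small diameter are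
used rather than balls because they can be concatenated without loss in `ρ`
(`DynCoverable.inter_preimage_iterate`), and `r` is real so that rates `exp (t * n)` fit in. -/
def DynCoverable [PseudoMetricSpace X] (T : X → X) (n : ℕ) (ρ : ℝ) (Y : Set X) (r : ℝ) : Prop :=
  ∃ F : Finset (Set X), (F.card : ℝ) ≤ r ∧ Y ⊆ ⋃₀ (F : Set (Set X)) ∧
    ∀ A ∈ F, ∀ x ∈ A, ∀ y ∈ A, ∀ k < n, dist (T^[k] x) (T^[k] y) ≤ ρ

namespace DynCoverable

variable [PseudoMetricSpace X] {T : X → X} {n : ℕ} {ρ r r' M : ℝ} {Y Y' : Set X}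

theorem mono (h : DynCoverable T n ρ Y r) (hY : Y' ⊆ Y) (hr : r ≤ r') :
    DynCoverable T n ρ Y' r' := by
  obtain ⟨F, hcard, hcover, hdiam⟩ := h
  exact ⟨F, hcard.trans hr, hY.trans hcover, hdiam⟩

theorem empty (T : X → X) (n : ℕ) (ρ : ℝ) (hr : 0 ≤ r) : DynCoverable T n ρ ∅ r :=
  ⟨∅, by simpa using hr, by simp, by simp⟩

theorem union (h : DynCoverable T n ρ Y r) (h' : DynCoverable T n ρ Y' r') :
    DynCoverable T n ρ (Y ∪ Y') (r + r') := by
  classical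
  obtain ⟨F, hcard, hcover, hdiam⟩ := h
  obtain ⟨F', hcard', hcover', hdiam'⟩ := h'
  refine ⟨F ∪ F', ?_, ?_, ?_⟩
  · calc ((F ∪ F').card : ℝ) ≤ F.card + F'.card := mod_cast Finset.card_union_le F F'
      _ ≤ r + r' := add_le_add hcard hcard'
  · rw [Finset.coe_union, sUnion_union]
    exact union_subset_union hcover hcover'
  · intro A hA
    exact (Finset.mem_union.1 hA).elim (hdiam A) (hdiam' A)

theorem biUnion {ι : Type*} (I : Finset ι) {Y : ι → Set X} {r : ι → ℝ}
    (h : ∀ i ∈ I, DynCoverable T n ρ (Y i) (r i)) :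
    DynCoverable T n ρ (⋃ i ∈ I, Y i) (∑ i ∈ I, r i) := by
  classical
  induction I using Finset.induction_on with
  | empty => simpa using empty T n ρ le_rfl
  | insert i I hi ih =>
    rw [Finset.sum_insert hi, Finset.set_biUnion_insert]
    exact (h i (I.mem_insert_self i)).union (ih fun j hj => h j (Finset.mem_insert_of_mem hj))

theorem inter_preimage_iterate {m : ℕ} (h : DynCoverable T m ρ Y r)
    (h' : DynCoverable T n ρ Y' r') :
    DynCoverable T (m + n) ρ (Y ∩ T^[m] ⁻¹' Y') (r * r') := by
  classical
  obtain ⟨F, hcard, hcover, hdiam⟩ := h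
  obtain ⟨F', hcard', hcover', hdiam'⟩ := h'
  refine ⟨Finset.image₂ (fun A B => A ∩ T^[m] ⁻¹' B) F F', ?_, ?_, ?_⟩
  · calc ((Finset.image₂ (fun A B => A ∩ T^[m] ⁻¹' B) F F').card : ℝ)
        ≤ F.card * F'.card := mod_cast Finset.card_image₂_le _ F F'
      _ ≤ r * r' := mul_le_mul hcard hcard' (Nat.cast_nonneg _) ((Nat.cast_nonneg _).trans hcard)
  · rintro x ⟨hx, hx'⟩
    obtain ⟨A, hA, hxA⟩ := hcover hx
    obtain ⟨B, hB, hxB⟩ := hcover' hx'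
    exact ⟨_, Finset.mem_image₂_of_mem hA hB, hxA, hxB⟩
  · intro C hC x hx y hy k hk
    obtain ⟨A, hA, B, hB, rfl⟩ := Finset.mem_image₂.1 hC
    rcases lt_or_ge k m with hkm | hmk
    · exact hdiam A hA x hx.1 y hy.1 k hkm
    · obtain ⟨j, rfl⟩ := Nat.exists_eq_add_of_le' hmk
      simpa only [Function.iterate_add_apply] using hdiam' B hB _ hx.2 _ hy.2 j (by lia)

theorem preimage (h1 : DynCoverable T 1 ρ univ M) (h : DynCoverable T n ρ Y r) :
    DynCoverable T (n + 1) ρ (T ⁻¹' Y) (M * r) := by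
  simpa [add_comm] using h1.inter_preimage_iterate h

theorem univ_pow (h1 : DynCoverable T 1 ρ univ M) (n : ℕ) : DynCoverable T n ρ univ (M ^ n) := by
  induction n with
  | zero => exact ⟨{univ}, by simp, by simp, by simp⟩
  | succ n ih => simpa only [pow_succ', preimage_univ] using h1.preimage ih

theorem exists_univ_one [CompactSpace X] (T : X → X) (hρ : 0 < ρ) :
    ∃ M : ℝ, 1 ≤ M ∧ DynCoverable T 1 ρ univ M := by
  classical
  obtain ⟨C, -, hC⟩ := (isCompact_univ (X := X)).elim_nhds_subcover
    (fun c => Metric.ball c (ρ / 2)) fun c _ => Metric.ball_mem_nhds c (half_pos hρ)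
  refine ⟨_, le_max_left 1 _, C.image fun c => Metric.ball c (ρ / 2), le_max_right _ _, ?_, ?_⟩
  · simpa [sUnion_image] using hC
  · simp only [Finset.mem_image, forall_exists_index, and_imp]
    rintro _ c - rfl x hx y hy k hk
    obtain rfl : k = 0 := by lia
    calc dist x y ≤ dist x c + dist y c := dist_triangle_right x y c
      _ ≤ ρ := by linarith [Metric.mem_ball.1 hx, Metric.mem_ball.1 hy]

end DynCoverable

section Tiling

theorem setOf_visitCount_le_subset {ι : Type*} (T : X → X) (I : Finset ι) {ℓ : ι → ℕ}
    (W : ι → Set X) {N : ℕ} (hℓ : ∀ i ∈ I, ℓ i ≤ N + 1) (b : ℕ) :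
    {x | visitCount T (⋃ i ∈ I, W i)ᶜ (N + 1) x ≤ b} ⊆
      {x | visitCount T (⋃ i ∈ I, W i)ᶜ N (T x) + 1 ≤ b} ∪
        ⋃ i ∈ I, W i ∩ T^[ℓ i] ⁻¹' {x | visitCount T (⋃ i ∈ I, W i)ᶜ (N + 1 - ℓ i) x ≤ b} := by
  intro x hx
  rw [mem_ofPred_eq] at hx
  by_cases hxW : x ∈ ⋃ i ∈ I, W i
  · obtain ⟨i, hi, hxi⟩ := mem_iUnion₂.1 hxW
    refine .inr (mem_iUnion₂.2 ⟨i, hi, hxi, ?_⟩)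
    rw [← Nat.add_sub_of_le (hℓ i hi), visitCount_add] at hx
    exact (Nat.le_add_left _ _).trans hx
  · exact .inl ((visitCount_succ_of_mem (mem_compl hxW)).symm.trans_le hx)

variable [PseudoMetricSpace X] {T : X → X} {ρ M t : ℝ}

theorem DynCoverable.setOf_visitCount_add_one_le {Z : Set X} {N : ℕ} {A : ℝ}
    (hM : 0 ≤ M) (hA : 0 ≤ A) (ht : 0 ≤ t) (h1 : DynCoverable T 1 ρ univ M)
    (hN : ∀ b : ℕ, DynCoverable T N ρ {x | visitCount T Z N x ≤ b}
      (A * (2 * M) ^ b * Real.exp (t * N))) (b : ℕ) :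
    DynCoverable T (N + 1) ρ {x | visitCount T Z N (T x) + 1 ≤ b}
      (1 / 2 * (A * (2 * M) ^ b * Real.exp (t * (N + 1 : ℕ)))) := by
  rcases b with _ | b
  · simpa using empty T (N + 1) ρ (by positivity)
  refine (h1.preimage (hN b)).mono (fun x hx => Nat.succ_le_succ_iff.1 hx) ?_
  calc M * (A * (2 * M) ^ b * Real.exp (t * N))
      = 1 / 2 * (A * (2 * M) ^ (b + 1) * Real.exp (t * N)) := by ring
    _ ≤ 1 / 2 * (A * (2 * M) ^ (b + 1) * Real.exp (t * (N + 1 : ℕ))) := by gcongr; simp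

/-- The Kraft-type hypothesis lets each orbit segment be cut greedily into tiles `W i` of length
`ℓ i` and single steps off the tiles, a single step costing a factor `2 * M`. -/
theorem DynCoverable.exists_setOf_visitCount_le {ι : Type*} (hM : 1 ≤ M) (ht : 0 ≤ t)
    (h1 : DynCoverable T 1 ρ univ M) (I : Finset ι) {ℓ : ι → ℕ} (hℓ : ∀ i ∈ I, 1 ≤ ℓ i)
    {W : ι → Set X} {r : ι → ℝ} (hW : ∀ i ∈ I, DynCoverable T (ℓ i) ρ (W i) (r i))
    (hkraft : ∑ i ∈ I, r i * Real.exp (-(t * ℓ i)) ≤ 1 / 2) :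
    ∃ A : ℝ, 1 ≤ A ∧ ∀ N b : ℕ, DynCoverable T N ρ
      {x | visitCount T (⋃ i ∈ I, W i)ᶜ N x ≤ b} (A * (2 * M) ^ b * Real.exp (t * N)) := by
  have hA : 1 ≤ M ^ I.sup ℓ := one_le_pow₀ hM
  refine ⟨M ^ I.sup ℓ, hA, fun N => ?_⟩
  induction N using Nat.strong_induction_on with
  | _ N ih =>
  intro b
  rcases le_or_gt N (I.sup ℓ) with hN | hN
  · refine (h1.univ_pow N).mono (subset_univ _) ?_
    calc M ^ N ≤ M ^ I.sup ℓ * 1 * 1 := by simpa using pow_le_pow_right₀ hM hN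
      _ ≤ M ^ I.sup ℓ * (2 * M) ^ b * Real.exp (t * N) := by
        gcongr
        · exact one_le_pow₀ (by linarith)
        · exact Real.one_le_exp (by positivity)
  obtain ⟨N, rfl⟩ := Nat.exists_eq_succ_of_ne_zero (Nat.ne_zero_of_lt hN)
  have hℓN : ∀ i ∈ I, ℓ i ≤ N + 1 := fun i hi => (Finset.le_sup hi).trans hN.le
  have htile : ∀ i ∈ I, DynCoverable T (N + 1) ρ
      (W i ∩ T^[ℓ i] ⁻¹' {x | visitCount T (⋃ i ∈ I, W i)ᶜ (N + 1 - ℓ i) x ≤ b})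
      (r i * Real.exp (-(t * ℓ i)) *
        (M ^ I.sup ℓ * (2 * M) ^ b * Real.exp (t * (N + 1 : ℕ)))) := fun i hi => by
    have hlt : N + 1 - ℓ i < N + 1 := Nat.sub_lt N.succ_pos (hℓ i hi)
    have h := (hW i hi).inter_preimage_iterate (ih _ hlt b)
    rw [Nat.add_sub_of_le (hℓN i hi), Nat.cast_sub (hℓN i hi), mul_sub, sub_eq_neg_add,
      Real.exp_add] at h
    exact h.mono subset_rfl (le_of_eq (by ring))
  have hstep := setOf_visitCount_add_one_le (by linarith) (by linarith) ht h1
    (ih N N.lt_succ_self) b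
  refine (hstep.union (biUnion I htile)).mono (setOf_visitCount_le_subset T I W hℓN b) ?_
  rw [← Finset.sum_mul, ← add_mul]
  exact mul_le_of_le_one_left (by positivity) (by linarith)

theorem DynCoverable.exists_setOf_visitCount_le_mul {ι : Type*} {δ : ℝ} (hM : 1 ≤ M)
    (ht : 0 ≤ t) (hδ : 0 ≤ δ) (h1 : DynCoverable T 1 ρ univ M) (I : Finset ι) {ℓ : ι → ℕ}
    (hℓ : ∀ i ∈ I, 1 ≤ ℓ i) {W : ι → Set X} {r : ι → ℝ}
    (hW : ∀ i ∈ I, DynCoverable T (ℓ i) ρ (W i) (r i))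
    (hkraft : ∑ i ∈ I, r i * Real.exp (-(t * ℓ i)) ≤ 1 / 2) :
    ∃ A : ℝ, 1 ≤ A ∧ ∀ N : ℕ, DynCoverable T N ρ
      {x | (visitCount T (⋃ i ∈ I, W i)ᶜ N x : ℝ) ≤ δ * N}
      (A * Real.exp ((t + δ * Real.log (2 * M)) * N)) := by
  obtain ⟨A, hA, hcover⟩ := exists_setOf_visitCount_le hM ht h1 I hℓ hW hkraft
  refine ⟨A, hA, fun N => (hcover N ⌊δ * N⌋₊).mono (fun x hx => Nat.le_floor hx) ?_⟩
  have hpow : (2 * M) ^ ⌊δ * N⌋₊ ≤ Real.exp (δ * N * Real.log (2 * M)) := by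
    have hlog : 0 ≤ Real.log (2 * M) := Real.log_nonneg (by linarith)
    have hfloor : (⌊δ * N⌋₊ : ℝ) ≤ δ * N := Nat.floor_le (by positivity)
    rw [← Real.exp_log (show 0 < 2 * M by linarith), ← Real.exp_nat_mul,
      Real.log_exp]
    gcongr
  calc A * (2 * M) ^ ⌊δ * N⌋₊ * Real.exp (t * N)
      ≤ A * Real.exp (δ * N * Real.log (2 * M)) * Real.exp (t * N) := by gcongr
    _ = A * Real.exp ((t + δ * Real.log (2 * M)) * N) := by
      rw [mul_assoc, ← Real.exp_add]; ring_nf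

theorem DynCoverable.eventually_setOf_visitCount_le_mul {G : Set X} {n : ℕ} {s η δ : ℝ}
    (hM : 1 ≤ M) (hs : 0 ≤ s) (hη : 0 < η) (hδ : 0 ≤ δ) (h1 : DynCoverable T 1 ρ univ M)
    (hn : Real.exp (-(η * n)) ≤ 1 / 2) (hG : DynCoverable T n ρ G (Real.exp (s * n))) :
    ∀ᶠ ℓ : ℕ in atTop, DynCoverable T ℓ ρ {x | (visitCount T Gᶜ ℓ x : ℝ) ≤ δ * ℓ}
      (Real.exp ((s + 2 * η + δ * Real.log (2 * M)) * ℓ)) := by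
  have hn1 : 1 ≤ n := by
    by_contra! hn0
    norm_num [Nat.lt_one_iff.1 hn0] at hn
  have hkraft : Real.exp (s * n) * Real.exp (-((s + η) * n)) ≤ 1 / 2 := by
    rwa [← Real.exp_add, show s * n + -((s + η) * n) = -(η * n) by ring]
  obtain ⟨A, -, hcover⟩ := exists_setOf_visitCount_le_mul (δ := δ) hM (add_nonneg hs hη.le) hδ
    h1 ({()} : Finset Unit) (fun _ _ => hn1) (fun _ _ => hG) (by simpa using hkraft)
  have hlarge : ∀ᶠ ℓ : ℕ in atTop, A ≤ Real.exp (η * ℓ) :=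
    (Real.tendsto_exp_atTop.comp
      (tendsto_natCast_atTop_atTop.const_mul_atTop hη)).eventually_ge_atTop A
  filter_upwards [hlarge] with ℓ hℓ
  refine (hcover ℓ).mono (by simp [iInter_const]) ?_
  calc A * Real.exp ((s + η + δ * Real.log (2 * M)) * ℓ)
      ≤ Real.exp (η * ℓ) * Real.exp ((s + η + δ * Real.log (2 * M)) * ℓ) := by gcongr
    _ = Real.exp ((s + 2 * η + δ * Real.log (2 * M)) * ℓ) := by
      rw [← Real.exp_add]; ring_nf

end Tiling

section BowenMetric

variable [MetricSpace X] {T : X → X} {n : ℕ} {x y : X} {c ε : ℝ}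

theorem dist_le_dynDist (T : X → X) {k : ℕ} (hk : k < n) (x y : X) :
    dist (T^[k] x) (T^[k] y) ≤ dynDist T n x y := by
  have hbdd : BddAbove (range fun k => ⨆ _ : k ∈ Finset.range n, dist (T^[k] x) (T^[k] y)) := by
    refine ⟨∑ k ∈ Finset.range n, dist (T^[k] x) (T^[k] y), ?_⟩
    rintro _ ⟨k, rfl⟩
    refine Real.iSup_le (fun hk => ?_) (Finset.sum_nonneg fun _ _ => dist_nonneg)
    exact Finset.single_le_sum (f := fun k => dist (T^[k] x) (T^[k] y))
      (fun _ _ => dist_nonneg) hk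
  simpa [dynDist, hk] using le_ciSup hbdd k

theorem dynDist_le_iff (hc : 0 ≤ c) :
    dynDist T n x y ≤ c ↔ ∀ k < n, dist (T^[k] x) (T^[k] y) ≤ c :=
  ⟨fun h _ hk => (dist_le_dynDist T hk x y).trans h, fun h =>
    Real.iSup_le (fun k => Real.iSup_le (fun hk => h k (Finset.mem_range.1 hk)) hc) hc⟩

theorem dynDist_self (T : X → X) (n : ℕ) (x : X) : dynDist T n x x = 0 := by
  simp [dynDist]

theorem dynDist_comm (T : X → X) (n : ℕ) (x y : X) : dynDist T n x y = dynDist T n y x := by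
  simp only [dynDist, dist_comm]

theorem dynDist_lt_iff (hc : 0 < c) :
    dynDist T n x y < c ↔ ∀ k < n, dist (T^[k] x) (T^[k] y) < c := by
  refine ⟨fun h k hk => (dist_le_dynDist T hk x y).trans_lt h, fun h => ?_⟩
  rcases (Finset.range n).eq_empty_or_nonempty with hn | hn
  · simpa [dynDist, hn] using hc
  · obtain ⟨k, hk, hmax⟩ := Finset.exists_max_image _ (fun k => dist (T^[k] x) (T^[k] y)) hn
    exact ((dynDist_le_iff dist_nonneg).2 fun j hj => hmax j (Finset.mem_range.2 hj)).trans_lt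
      (h k (Finset.mem_range.1 hk))

theorem dynDist_triangle (T : X → X) (n : ℕ) (x y z : X) :
    dynDist T n x z ≤ dynDist T n x y + dynDist T n y z := by
  have hnonneg : ∀ x y, 0 ≤ dynDist T n x y := fun x y =>
    Real.iSup_nonneg fun _ => Real.iSup_nonneg fun _ => dist_nonneg
  exact (dynDist_le_iff (add_nonneg (hnonneg x y) (hnonneg y z))).2 fun k hk =>
    (dist_triangle _ _ _).trans (add_le_add (dist_le_dynDist T hk x y) (dist_le_dynDist T hk y z))

theorem isOpen_dynBall (hT : Continuous T) (n : ℕ) (x : X) (hε : 0 < ε) :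
    IsOpen (dynBall T n x ε) := by
  have h : dynBall T n x ε = ⋂ k ∈ Finset.range n, {y | dist (T^[k] x) (T^[k] y) < ε} := by
    ext y
    simp [dynBall, dynDist_lt_iff hε]
  rw [h]
  exact isOpen_biInter_finset fun k _ => isOpen_lt (by fun_prop) (by fun_prop)

theorem dynCoverable_biUnion_dynBall (T : X → X) (n : ℕ) (C : Finset X) (ε : ℝ) :
    DynCoverable T n (2 * ε) (⋃ c ∈ C, dynBall T n c ε) C.card := by
  classical
  refine ⟨C.image (dynBall T n · ε), mod_cast Finset.card_image_le, by simp, ?_⟩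
  simp only [Finset.mem_image, forall_exists_index, and_imp]
  rintro _ c - rfl x hx y hy k hk
  have hxy := dynDist_triangle T n x c y
  rw [dynDist_comm T n x c] at hxy
  rw [dynBall, mem_ofPred_eq] at hx hy
  linarith [dist_le_dynDist T hk x y]

end BowenMetric

section SeparatedSets

variable [MetricSpace X] {T : X → X} {n : ℕ} {ρ r : ℝ}

theorem card_le_of_dynCoverable (hρ : 0 ≤ ρ) (h : DynCoverable T n ρ univ r) {E : Finset X}
    (hE : ∀ x ∈ E, ∀ y ∈ E, x ≠ y → ρ < dynDist T n x y) : (E.card : ℝ) ≤ r := by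
  obtain ⟨F, hcard, hcover, hdiam⟩ := h
  choose A hA hxA using fun x : X => hcover (mem_univ x)
  have hinj : InjOn A E := fun x hx y hy hxy => by
    by_contra hne
    exact (hE x hx y hy hne).not_ge <| (dynDist_le_iff hρ).2 <|
      hdiam _ (hA x) x (hxA x) y (hxy ▸ hxA y)
  calc (E.card : ℝ) ≤ F.card := mod_cast Finset.card_le_card_of_injOn A (fun x _ => hA x) hinj
    _ ≤ r := hcard

theorem bddAbove_card_separated (hρ : 0 ≤ ρ) (h : DynCoverable T n ρ univ r) :
    BddAbove {m | ∃ E : Finset X, ↑E ⊆ (univ : Set X) ∧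
      (∀ x ∈ E, ∀ y ∈ E, x ≠ y → ρ < dynDist T n x y) ∧ E.card = m} := by
  refine ⟨⌊r⌋₊, ?_⟩
  rintro m ⟨E, -, hE, rfl⟩
  exact Nat.le_floor (card_le_of_dynCoverable hρ h hE)

theorem exists_separated_card_eq_sepNum (hρ : 0 ≤ ρ) (h : DynCoverable T n ρ univ r) :
    ∃ E : Finset X, (∀ x ∈ E, ∀ y ∈ E, x ≠ y → ρ < dynDist T n x y) ∧
      E.card = sepNum T n univ ρ := by
  obtain ⟨E, -, hE⟩ := Nat.sSup_mem (by exact ⟨0, ∅, by simp⟩) (bddAbove_card_separated hρ h)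
  exact ⟨E, hE⟩

theorem sepNum_le_of_dynCoverable (hρ : 0 ≤ ρ) (h : DynCoverable T n ρ univ r) :
    (sepNum T n univ ρ : ℝ) ≤ r := by
  obtain ⟨E, hE, hcard⟩ := exists_separated_card_eq_sepNum hρ h
  exact hcard ▸ card_le_of_dynCoverable hρ h hE

theorem exists_spanning_card_eq_sepNum [CompactSpace X] (T : X → X) (n : ℕ) (hρ : 0 < ρ) :
    ∃ E : Finset X, E.card = sepNum T n univ ρ ∧ ∀ x, ∃ y ∈ E, dynDist T n x y ≤ ρ := by
  classical
  obtain ⟨M, -, hM⟩ := DynCoverable.exists_univ_one T hρ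
  obtain ⟨E, hE, hcard⟩ := exists_separated_card_eq_sepNum hρ.le (hM.univ_pow n)
  refine ⟨E, hcard, fun x => ?_⟩
  by_contra! hfar
  have hxE : x ∉ E := fun hx => hρ.not_gt (dynDist_self T n x ▸ hfar x hx)
  have hinsert : ∀ a ∈ insert x E, ∀ b ∈ insert x E, a ≠ b → ρ < dynDist T n a b := by
    intro a ha b hb hab
    rcases Finset.mem_insert.1 ha with rfl | haE <;> rcases Finset.mem_insert.1 hb with rfl | hbE
    · exact absurd rfl hab
    · exact hfar b hbE
    · exact dynDist_comm T n a b ▸ hfar a haE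
    · exact hE a haE b hbE hab
  have hle : (insert x E).card ≤ sepNum T n univ ρ :=
    le_csSup (bddAbove_card_separated hρ.le (hM.univ_pow n)) ⟨_, subset_univ _, hinsert, rfl⟩
  rw [Finset.card_insert_of_notMem hxE, hcard] at hle
  exact hle.not_gt (Nat.lt_succ_self _)

theorem sepNum_le_exp_of_log_div_le {n : ℕ} {K : Set X} {ε s : ℝ} (hn : 0 < n)
    (h : Real.log (sepNum T n K ε) / n ≤ s) : (sepNum T n K ε : ℝ) ≤ Real.exp (s * n) := by
  rw [div_le_iff₀ (mod_cast hn)] at h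
  rcases (sepNum T n K ε).eq_zero_or_pos with h0 | hpos
  · simpa [h0] using (Real.exp_pos (s * n)).le
  · exact (Real.log_le_iff_le_exp (mod_cast hpos)).1 h

theorem sepEnt_univ_le_of_dynCoverable {A t : ℝ} (hρ : 0 ≤ ρ) (hA : 1 ≤ A) (ht : 0 ≤ t)
    (h : ∀ᶠ N : ℕ in atTop, DynCoverable T N ρ univ (A * Real.exp (t * N))) :
    sepEnt T univ ρ ≤ t := by
  have hlim : Tendsto (fun N : ℕ => Real.log A / N + t) atTop (𝓝 t) := by
    simpa using (tendsto_const_div_atTop_nhds_zero_nat (Real.log A)).add_const t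
  refine (limsup_le_limsup ?_).trans (continuous_coe_real_ereal.tendsto t |>.comp hlim).limsup_eq.le
  filter_upwards [h, eventually_gt_atTop 0] with N hN hN0
  have hpos : (0 : ℝ) < N := mod_cast hN0
  have hlog : Real.log (sepNum T N univ ρ) ≤ Real.log A + t * N := by
    rcases (sepNum T N univ ρ).eq_zero_or_pos with h0 | hsep
    · rw [h0, Nat.cast_zero, Real.log_zero]
      exact add_nonneg (Real.log_nonneg hA) (by positivity)
    · rw [← Real.log_exp (t * N), ← Real.log_mul (by positivity) (Real.exp_ne_zero _)]
      exact Real.log_le_log (mod_cast hsep) (sepNum_le_of_dynCoverable hρ hN)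
  rw [Function.comp_apply, EReal.coe_le_coe_iff, div_add' _ _ _ hpos.ne']
  gcongr

end SeparatedSets

section BrinKatok

theorem neg_log_div_natCast_le_iff {n : ℕ} (hn : 0 < n) (m : ENNReal) (s : ℝ) :
    -(ENNReal.log m) / (n : EReal) ≤ s ↔ ENNReal.ofReal (Real.exp (-(s * n))) ≤ m := by
  have hcoe : -((n : EReal) * (s : EReal)) = ((-(s * n) : ℝ) : EReal) := by
    push_cast
    rw [mul_comm]
  rw [EReal.div_le_iff_le_mul (mod_cast hn) (EReal.natCast_ne_top n), ← ENNReal.log_le_log_iff,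
    ENNReal.log_ofReal_of_pos (Real.exp_pos _), Real.log_exp, EReal.neg_le, hcoe]

theorem ae_eventually_notMem_of_eventually_measure_le [MeasurableSpace X] {μ : Measure X}
    {A : ℕ → Set X} {f : ℕ → ENNReal} (hf : ∑' n, f n ≠ ⊤)
    (hA : ∀ᶠ n in atTop, μ (A n) ≤ f n) : ∀ᵐ x ∂μ, ∀ᶠ n in atTop, x ∉ A n := by
  obtain ⟨N, hN⟩ := eventually_atTop.1 hA
  have hsum : ∑' n, μ (A (n + N)) ≠ ⊤ := ne_top_of_le_ne_top hf <|
    (ENNReal.tsum_le_tsum fun n => hN _ (Nat.le_add_left N n)).trans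
      (ENNReal.tsum_comp_le_tsum_of_injective (add_left_injective N) f)
  filter_upwards [ae_eventually_notMem hsum] with x hx
  rwa [← map_add_atTop_eq_nat N]

variable [MetricSpace X] [MeasurableSpace X] {T : X → X}

theorem measure_setOf_measure_dynBall_lt_le [CompactSpace X] (T : X → X) (μ : Measure X) (n : ℕ)
    {ρ ε : ℝ} (hρ : 0 < ρ) (hρε : 2 * ρ < ε) (c : ENNReal) :
    μ {x | μ (dynBall T n x ε) < c} ≤ sepNum T n univ ρ * c := by
  obtain ⟨E, hcard, hspan⟩ := exists_spanning_card_eq_sepNum T n hρ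
  let cell (y : X) : Set X := {x | dynDist T n x y ≤ ρ ∧ μ (dynBall T n x ε) < c}
  have hcover : {x | μ (dynBall T n x ε) < c} ⊆ ⋃ y ∈ E, cell y := fun x hx =>
    have ⟨y, hy, hxy⟩ := hspan x
    mem_iUnion₂.2 ⟨y, hy, hxy, hx⟩
  have hcell (y : X) : μ (cell y) ≤ c := by
    rcases (cell y).eq_empty_or_nonempty with hempty | ⟨x, hxy, hx⟩
    · simp [hempty]
    · refine (measure_mono fun z hz => ?_).trans hx.le
      calc dynDist T n x z ≤ dynDist T n x y + dynDist T n y z := dynDist_triangle T n x y z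
        _ ≤ ρ + ρ := add_le_add hxy (dynDist_comm T n y z ▸ hz.1)
        _ < ε := by linarith
  calc μ {x | μ (dynBall T n x ε) < c} ≤ μ (⋃ y ∈ E, cell y) := measure_mono hcover
    _ ≤ ∑ y ∈ E, μ (cell y) := measure_biUnion_finset_le E cell
    _ ≤ ∑ _y ∈ E, c := Finset.sum_le_sum fun y _ => hcell y
    _ = sepNum T n univ ρ * c := by rw [Finset.sum_const, nsmul_eq_mul, hcard]

theorem essSup_brinKatok_le_sepEnt [CompactSpace X] (T : X → X) (μ : Measure X) {ρ ε : ℝ}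
    (hρ : 0 < ρ) (hρε : 2 * ρ < ε) :
    essSup (fun x => brinKatok T μ x ε) μ ≤ sepEnt T univ ρ := by
  refine EReal.le_of_forall_lt_iff_le.1 fun s hs => ?_
  obtain ⟨s', hs', hs's⟩ := EReal.lt_iff_exists_real_btwn.1 hs
  rw [EReal.coe_lt_coe_iff] at hs's
  let q := ENNReal.ofReal (Real.exp (-(s - s')))
  have hq : q < 1 := by
    rw [ENNReal.ofReal_lt_one, Real.exp_lt_one_iff]
    linarith
  have hsmall : ∀ᶠ n : ℕ in atTop,
      μ {x | μ (dynBall T n x ε) < ENNReal.ofReal (Real.exp (-(s * n)))} ≤ q ^ n := by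
    filter_upwards [eventually_lt_of_limsup_lt hs', eventually_gt_atTop 0] with n hlog hn
    have hsep := sepNum_le_exp_of_log_div_le hn (EReal.coe_lt_coe_iff.1 hlog).le
    calc _ ≤ sepNum T n univ ρ * ENNReal.ofReal (Real.exp (-(s * n))) :=
          measure_setOf_measure_dynBall_lt_le T μ n hρ hρε _
      _ ≤ ENNReal.ofReal (Real.exp (s' * n) * Real.exp (-(s * n))) := by
        rw [← ENNReal.ofReal_natCast, ← ENNReal.ofReal_mul (Nat.cast_nonneg _)]
        gcongr
      _ = q ^ n := by
        rw [← ENNReal.ofReal_pow (Real.exp_pos _).le, ← Real.exp_add, ← Real.exp_nat_mul]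
        ring_nf
  have hsum : ∑' n, q ^ n ≠ ⊤ := by
    rw [ENNReal.tsum_geometric]
    exact ENNReal.inv_ne_top.2 (tsub_pos_of_lt hq).ne'
  refine essSup_le_of_ae_le _ ?_
  filter_upwards [ae_eventually_notMem_of_eventually_measure_le hsum hsmall] with x hx
  refine limsup_le_of_le (by isBoundedDefault) ?_
  filter_upwards [hx, eventually_gt_atTop 0] with n hxn hn
  exact (neg_log_div_natCast_le_iff hn _ s).2 (not_lt.1 hxn)

theorem brinKatok_nonneg (T : X → X) (μ : Measure X) [IsProbabilityMeasure μ] (x : X) (ε : ℝ) :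
    0 ≤ brinKatok T μ x ε := by
  refine le_limsup_of_frequently_le (.of_forall fun n => ?_) (by isBoundedDefault)
  have hlog : ENNReal.log (μ (dynBall T n x ε)) ≤ 0 := ENNReal.log_le_zero_iff.2 prob_le_one
  exact EReal.div_nonneg (EReal.neg_nonneg.2 hlog) (mod_cast n.zero_le)

theorem essSup_brinKatok_nonneg (T : X → X) (μ : Measure X) [IsProbabilityMeasure μ] (ε : ℝ) :
    0 ≤ essSup (fun x => brinKatok T μ x ε) μ := by
  obtain ⟨x, hx⟩ := (ae_le_essSup (μ := μ) (f := fun x => brinKatok T μ x ε)).exists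
  exact (brinKatok_nonneg T μ x ε).trans hx

/-- The supremum over ergodic `μ` of `h_μ^{BK}(ε)`, where `h_μ^{BK}(ε)` is the `μ`-essential
supremum of the Brin–Katok local entropy at scale `ε`. -/
noncomputable def supBrinKatok (T : X → X) (ε : ℝ) : EReal :=
  ⨆ μ ∈ ergodicMeasures T, essSup (fun x => brinKatok T μ x ε) μ

theorem supBrinKatok_le_sepEnt [CompactSpace X] (T : X → X) {ρ ε : ℝ} (hρ : 0 < ρ)
    (hρε : 2 * ρ < ε) : supBrinKatok T ε ≤ sepEnt T univ ρ :=
  iSup₂_le fun μ _ => essSup_brinKatok_le_sepEnt T μ hρ hρε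

theorem ae_brinKatok_lt_of_supBrinKatok_lt {ε s : ℝ} (h : supBrinKatok T ε < s)
    {μ : Measure X} (hμ : μ ∈ ergodicMeasures T) : ∀ᵐ x ∂μ, brinKatok T μ x ε < s := by
  filter_upwards [ae_le_essSup (μ := μ) (f := fun x => brinKatok T μ x ε)] with x hx
  exact hx.trans_lt <| (le_iSup₂ (f := fun μ (_ : μ ∈ ergodicMeasures T) =>
    essSup (fun x => brinKatok T μ x ε) μ) μ hμ).trans_lt h

theorem supBrinKatok_nonneg (h : (ergodicMeasures T).Nonempty) (ε : ℝ) :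
    0 ≤ supBrinKatok T ε := by
  obtain ⟨μ, hμ⟩ := h
  have : IsProbabilityMeasure μ := hμ.1
  exact (essSup_brinKatok_nonneg T μ ε).trans <| le_iSup₂ (f := fun μ (_ : μ ∈ ergodicMeasures T) =>
    essSup (fun x => brinKatok T μ x ε) μ) μ hμ

end BrinKatok

section ErgodicMaximizer

theorem isExtreme_setOf_forall_measure_le [MeasurableSpace X] (S : Set (Measure X))
    (hS : ∀ μ ∈ S, IsFiniteMeasure μ) (Z : Set X) :
    IsExtreme ENNReal S {μ ∈ S | ∀ ν ∈ S, ν Z ≤ μ Z} where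
  subset := sep_subset _ _
  left_mem_of_mem_openSegment := by
    rintro ν₁ hν₁ ν₂ hν₂ μ ⟨hμS, hμ⟩ ⟨a, b, ha, -, hab, rfl⟩
    refine ⟨hν₁, fun ν hν => (hμ ν hν).trans ?_⟩
    by_contra! hlt
    set μ := a • ν₁ + b • ν₂
    have : IsFiniteMeasure μ := hS μ hμS
    have : IsFiniteMeasure ν₂ := hS ν₂ hν₂
    have ha_top : a ≠ ⊤ := ne_top_of_le_ne_top ENNReal.one_ne_top (hab ▸ le_self_add)
    have hb_top : b ≠ ⊤ := ne_top_of_le_ne_top ENNReal.one_ne_top (hab ▸ le_add_self)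
    have : μ Z < μ Z := by
      calc μ Z = a * ν₁ Z + b * ν₂ Z := by simp [μ]
        _ < a * μ Z + b * μ Z := ENNReal.add_lt_add_of_lt_of_le
          (ENNReal.mul_ne_top hb_top (measure_ne_top ν₂ Z))
          (ENNReal.mul_lt_mul_right ha.ne' ha_top hlt) (mul_le_mul_right (hμ ν₂ hν₂) b)
        _ = μ Z := by rw [← add_mul, hab, one_mul]
    exact this.false

variable [TopologicalSpace X] [MeasurableSpace X] [BorelSpace X] [HasOuterApproxClosed X]

theorem upperSemicontinuous_toMeasure_apply {Z : Set X} (hZ : IsClosed Z) :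
    UpperSemicontinuous fun ν : ProbabilityMeasure X => (ν : Measure X) Z := fun _ =>
  upperSemicontinuousAt_iff_limsup_le.2 <|
    ProbabilityMeasure.limsup_measure_closed_le_of_tendsto (μs := id) tendsto_id hZ

theorem exists_mem_extremePoints_image_toMeasure [CompactSpace X]
    {K : Set (ProbabilityMeasure X)} (hK : IsCompact K) (hne : K.Nonempty) :
    (extremePoints ENNReal (ProbabilityMeasure.toMeasure '' K)).Nonempty := by
  let Φ (ν : ProbabilityMeasure X) (f : C(X, ℝ)) : ℝ := ∫ x, f x ∂(ν : Measure X)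
  have hΦ : Continuous Φ := continuous_pi ProbabilityMeasure.continuous_integral_continuousMap
  have hΦ_inj {ν ν' : ProbabilityMeasure X} (h : Φ ν = Φ ν') : (ν : Measure X) = ν' :=
    ext_of_forall_integral_eq_of_IsFiniteMeasure fun f => congrFun h f.toContinuousMap
  have hint (ν : ProbabilityMeasure X) (f : C(X, ℝ)) : Integrable f (ν : Measure X) :=
    f.continuous.integrable_of_hasCompactSupport (.of_compactSpace _)
  obtain ⟨_, ⟨μ, hμ, rfl⟩, hext⟩ := (hK.image hΦ).extremePoints_nonempty (hne.image Φ)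
  refine ⟨μ, mem_image_of_mem _ hμ, ?_⟩
  rintro _ ⟨ν₁, hν₁, rfl⟩ _ ⟨ν₂, hν₂, rfl⟩ ⟨a, b, ha, hb, hab, hμ_eq⟩
  have ha_top : a ≠ ⊤ := ne_top_of_le_ne_top ENNReal.one_ne_top (hab ▸ le_self_add)
  have hb_top : b ≠ ⊤ := ne_top_of_le_ne_top ENNReal.one_ne_top (hab ▸ le_add_self)
  refine hΦ_inj <| hext (mem_image_of_mem Φ hν₁) (mem_image_of_mem Φ hν₂)
    ⟨a.toReal, b.toReal, ENNReal.toReal_pos ha.ne' ha_top, ENNReal.toReal_pos hb.ne' hb_top, ?_, ?_⟩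
  · rw [← ENNReal.toReal_add ha_top hb_top, hab, ENNReal.toReal_one]
  · funext f
    change a.toReal * ∫ x, f x ∂(ν₁ : Measure X) + b.toReal * ∫ x, f x ∂(ν₂ : Measure X) =
      ∫ x, f x ∂(μ : Measure X)
    rw [← hμ_eq, integral_add_measure ((hint ν₁ f).smul_measure ha_top)
      ((hint ν₂ f).smul_measure hb_top), integral_smul_measure, integral_smul_measure,
      smul_eq_mul, smul_eq_mul]

theorem isCompact_setOf_measurePreserving [CompactSpace X] [T2Space X] {T : X → X}
    (hT : Continuous T) :
    IsCompact {ν : ProbabilityMeasure X | MeasurePreserving T (ν : Measure X) ν} := by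
  have h_eq : {ν : ProbabilityMeasure X | MeasurePreserving T (ν : Measure X) ν} =
      {ν | ν.map hT.measurable.aemeasurable = ν} := by
    ext ν
    refine ⟨fun h => ProbabilityMeasure.toMeasure_injective ?_, fun h => ⟨hT.measurable, ?_⟩⟩
    · simpa using h.map_eq
    · simpa using congrArg ProbabilityMeasure.toMeasure h
  rw [h_eq]
  exact (isClosed_eq (ProbabilityMeasure.continuous_map hT) continuous_id).isCompact

theorem exists_mem_ergodicMeasures_forall_measure_le [CompactSpace X] [T2Space X] {T : X → X}
    (hT : Continuous T) {Z : Set X} (hZ : IsClosed Z)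
    (hne : ∃ ν : ProbabilityMeasure X, MeasurePreserving T (ν : Measure X) ν) :
    ∃ μ ∈ ergodicMeasures T, ∀ ν : ProbabilityMeasure X, MeasurePreserving T (ν : Measure X) ν →
      (ν : Measure X) Z ≤ μ Z := by
  have hK := isCompact_setOf_measurePreserving hT
  have husc := upperSemicontinuous_toMeasure_apply hZ
  obtain ⟨m, hm, hmax⟩ := UpperSemicontinuousOn.exists_isMaxOn hne hK (husc.upperSemicontinuousOn _)
  let S : Set (Measure X) := {ν | MeasurePreserving T ν ν ∧ IsProbabilityMeasure ν}
  let K : Set (ProbabilityMeasure X) := {ν | MeasurePreserving T (ν : Measure X) ν} ∩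
    (fun ν => (ν : Measure X) Z) ⁻¹' Ici ((m : Measure X) Z)
  have hK_image : ProbabilityMeasure.toMeasure '' K = {μ ∈ S | ∀ ν ∈ S, ν Z ≤ μ Z} := by
    ext μ
    constructor
    · rintro ⟨μ, ⟨hμT, hμ⟩, rfl⟩
      exact ⟨⟨hμT, inferInstance⟩, fun ν hν => (hmax (a := ⟨ν, hν.2⟩) hν.1).trans hμ⟩
    · rintro ⟨⟨hμT, hμp⟩, hμ⟩
      exact ⟨⟨μ, hμp⟩, ⟨hμT, hμ m ⟨hm, inferInstance⟩⟩, rfl⟩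
  obtain ⟨μ, hμ⟩ := exists_mem_extremePoints_image_toMeasure
    (hK.inter_right (husc.isClosed_preimage _) : IsCompact K) ⟨m, hm, le_refl ((m : Measure X) Z)⟩
  rw [hK_image] at hμ
  have hS (ν : Measure X) (hν : ν ∈ S) : IsFiniteMeasure ν := have := hν.2; inferInstance
  have hμS := (isExtreme_setOf_forall_measure_le S hS Z).extremePoints_subset_extremePoints hμ
  exact ⟨μ, ⟨hμS.1.2, .of_mem_extremePoints hμS⟩, fun ν hν => hμ.1.2 ν ⟨hν, inferInstance⟩⟩

end ErgodicMaximizer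

section EmpiricalMeasure

/-- The empirical measure `(1/n) ∑_{k < n} δ_{T^k x}` of an orbit segment; it is `0` for `n = 0`. -/
noncomputable def empiricalMeasure [MeasurableSpace X] (T : X → X) (n : ℕ) (x : X) : Measure X :=
  (n : ENNReal)⁻¹ • ∑ k ∈ Finset.range n, Measure.dirac (T^[k] x)

section MeasurableSpace

variable [MeasurableSpace X] (T : X → X)

theorem isProbabilityMeasure_empiricalMeasure {n : ℕ} (hn : n ≠ 0) (x : X) :
    IsProbabilityMeasure (empiricalMeasure T n x) :=
  ⟨by simp [empiricalMeasure, ENNReal.inv_mul_cancel, hn]⟩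

theorem empiricalMeasure_apply {Z : Set X} (hZ : MeasurableSet Z) (n : ℕ) (x : X) :
    empiricalMeasure T n x Z = (n : ENNReal)⁻¹ * visitCount T Z n x := by
  simp [empiricalMeasure, natCast_visitCount, Measure.dirac_apply' _ hZ]

theorem integral_empiricalMeasure {f : X → ℝ} (hf : StronglyMeasurable f) (n : ℕ) (x : X) :
    ∫ y, f y ∂(empiricalMeasure T n x) = birkhoffAverage ℝ T f n x := by
  have hint (k : ℕ) : Integrable f (Measure.dirac (T^[k] x)) :=
    integrable_dirac' hf (by simp)
  rw [empiricalMeasure, integral_smul_measure, integral_finsetSum_measure fun k _ => hint k]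
  simp [birkhoffAverage, birkhoffSum, integral_dirac' _ _ hf]

end MeasurableSpace

variable [TopologicalSpace X] [CompactSpace X] [MeasurableSpace X] [BorelSpace X]
  [HasOuterApproxClosed X] {T : X → X}

theorem measurePreserving_of_tendsto_empiricalMeasure {ι : Type*} {l : Filter ι} [l.NeBot]
    (hT : Continuous T) {n : ι → ℕ} (hn : Tendsto n l atTop) (x : ι → X)
    {νs : ι → ProbabilityMeasure X} (hνs : ∀ i, (νs i : Measure X) = empiricalMeasure T (n i) (x i))
    {ν : ProbabilityMeasure X} (hν : Tendsto νs l (𝓝 ν)) :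
    MeasurePreserving T (ν : Measure X) ν := by
  have : IsProbabilityMeasure (Measure.map T (ν : Measure X)) :=
    Measure.isProbabilityMeasure_map hT.measurable.aemeasurable
  refine ⟨hT.measurable, ext_of_forall_integral_eq_of_IsFiniteMeasure fun f => ?_⟩
  rw [integral_map hT.measurable.aemeasurable f.continuous.measurable.aestronglyMeasurable]
  have havg (g : C(X, ℝ)) :
      Tendsto (fun i => birkhoffAverage ℝ T g (n i) (x i)) l (𝓝 (∫ y, g y ∂(ν : Measure X))) := by
    refine (((ProbabilityMeasure.continuous_integral_continuousMap g).tendsto ν).comp hν).congr ?_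
    intro i
    simp only [Function.comp_apply, hνs i]
    exact integral_empiricalMeasure T g.continuous.measurable.stronglyMeasurable _ _
  have hdiff : Tendsto (fun i => birkhoffAverage ℝ T f (n i) (T (x i)) -
      birkhoffAverage ℝ T f (n i) (x i)) l (𝓝 0) := by
    simp only [birkhoffAverage_apply_sub_birkhoffAverage, smul_eq_mul]
    refine (tendsto_inv_atTop_zero.comp
      (tendsto_natCast_atTop_atTop.comp hn)).zero_mul_isBoundedUnder_le ?_
    exact isBoundedUnder_of ⟨‖f‖ + ‖f‖, fun i =>
      (norm_sub_le _ _).trans (add_le_add (f.norm_coe_le_norm _) (f.norm_coe_le_norm _))⟩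
  have hcomp := havg (f.toContinuousMap.comp ⟨T, hT⟩)
  refine sub_eq_zero.1 (tendsto_nhds_unique (hcomp.sub (havg f.toContinuousMap)) (hdiff.congr ?_))
  intro i
  simp [birkhoffAverage, birkhoffSum, ← Function.iterate_succ_apply, Function.iterate_succ_apply']

variable [T2Space X]

theorem exists_measurePreserving_forall_le_measure (hT : Continuous T) {n : ℕ → ℕ}
    (hn : Tendsto n atTop atTop) (hn0 : ∀ i, n i ≠ 0) (x : ℕ → X) :
    ∃ ν : ProbabilityMeasure X, MeasurePreserving T (ν : Measure X) ν ∧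
      ∀ (Z : Set X) (c : ENNReal), IsClosed Z →
        (∀ᶠ i in atTop, c ≤ empiricalMeasure T (n i) (x i) Z) → c ≤ (ν : Measure X) Z := by
  let νs (i : ℕ) : ProbabilityMeasure X :=
    ⟨empiricalMeasure T (n i) (x i), isProbabilityMeasure_empiricalMeasure T (hn0 i) (x i)⟩
  obtain ⟨ν, hν⟩ := exists_clusterPt_of_compactSpace (map νs atTop)
  obtain ⟨U, hU, hνU⟩ := mapClusterPt_iff_ultrafilter.1 hν
  refine ⟨ν, measurePreserving_of_tendsto_empiricalMeasure hT (hn.mono_left hU) x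
    (fun _ => rfl) hνU, fun Z c hZ hc => ?_⟩
  exact (le_limsup_of_frequently_le (Filter.Eventually.frequently (hU hc))).trans
    (ProbabilityMeasure.limsup_measure_closed_le_of_tendsto hνU hZ)

theorem ergodicMeasures_nonempty [Nonempty X] (hT : Continuous T) :
    (ergodicMeasures T).Nonempty := by
  obtain ⟨x⟩ := ‹Nonempty X›
  obtain ⟨ν, hν, -⟩ := exists_measurePreserving_forall_le_measure hT (tendsto_add_atTop_nat 1)
    Nat.succ_ne_zero fun _ => x
  obtain ⟨μ, hμ, -⟩ := exists_mem_ergodicMeasures_forall_measure_le hT isClosed_empty ⟨ν, hν⟩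
  exact ⟨μ, hμ⟩

theorem exists_forall_visitCount_lt (hT : Continuous T) {Z : ℕ → Set X} (hZ : Antitone Z)
    (hZc : ∀ k, IsClosed (Z k)) {α : ℝ}
    (hα : ∀ μ ∈ ergodicMeasures T, μ (⋂ k, Z k) < ENNReal.ofReal α) :
    ∃ m : ℕ, ∀ n > m, ∀ x, (visitCount T (Z m) n x : ℝ) < α * n := by
  by_contra! hcon
  choose n hn x hx using hcon
  have hn0 (m : ℕ) : n m ≠ 0 := (Nat.zero_le m).trans_lt (hn m) |>.ne'
  have hn_top : Tendsto n atTop atTop := tendsto_atTop_mono (fun m => (hn m).le) tendsto_id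
  obtain ⟨ν, hνT, hν⟩ := exists_measurePreserving_forall_le_measure hT hn_top hn0 x
  obtain ⟨μ, hμ, hνμ⟩ :=
    exists_mem_ergodicMeasures_forall_measure_le hT (isClosed_iInter hZc) ⟨ν, hνT⟩
  have hνZ (k : ℕ) : ENNReal.ofReal α ≤ (ν : Measure X) (Z k) := by
    refine hν (Z k) _ (hZc k) ?_
    filter_upwards [eventually_ge_atTop k] with m hm
    have hcount : α * n m ≤ (visitCount T (Z k) (n m) (x m) : ℝ) :=
      (hx m).trans (mod_cast visitCount_mono (hZ hm))
    rw [empiricalMeasure_apply T (hZc k).measurableSet, mul_comm, ← div_eq_mul_inv,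
      ENNReal.le_div_iff_mul_le (.inl (by simpa using hn0 m)) (.inl (by simp)),
      ← ENNReal.ofReal_natCast, ← ENNReal.ofReal_natCast, ← ENNReal.ofReal_mul' (Nat.cast_nonneg _)]
    exact ENNReal.ofReal_le_ofReal hcount
  have hν_inter : ENNReal.ofReal α ≤ (ν : Measure X) (⋂ k, Z k) :=
    ge_of_tendsto' (tendsto_measure_iInter_atTop
      (fun k => (hZc k).measurableSet.nullMeasurableSet) hZ ⟨0, measure_ne_top _ _⟩) hνZ
  exact (hα μ hμ).not_ge (hν_inter.trans (hνμ ν hνT))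

end EmpiricalMeasure

section MeasureEstimates

variable [MeasurableSpace X] {μ : Measure X} {T : X → X} {Z : Set X}

theorem lintegral_visitCount (hμ : MeasurePreserving T μ μ) (hZ : MeasurableSet Z) (n : ℕ) :
    ∫⁻ x, (visitCount T Z n x : ENNReal) ∂μ = n * μ Z := by
  have hind : Measurable (Z.indicator (1 : X → ENNReal)) := measurable_one.indicator hZ
  simp only [natCast_visitCount]
  rw [lintegral_finsetSum (Finset.range n) (f := fun k x => Z.indicator 1 (T^[k] x))
    fun k _ => hind.comp (hμ.iterate k).measurable]
  simp [(hμ.iterate _).lintegral_comp hind, lintegral_indicator_one hZ]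

theorem measure_compl_setOf_visitCount_le (hμ : MeasurePreserving T μ μ) (hZ : MeasurableSet Z)
    {n : ℕ} (hn : n ≠ 0) {δ : ℝ} (hδ : 0 < δ) (h : μ Z ≤ ENNReal.ofReal (δ * δ)) :
    μ {x | (visitCount T Z n x : ℝ) ≤ δ * n}ᶜ ≤ ENNReal.ofReal δ := by
  have hδn : 0 < δ * n := by positivity
  have hmeas : Measurable fun x => (visitCount T Z n x : ENNReal) := by
    simp only [natCast_visitCount]
    exact Finset.measurable_fun_sum _ fun k _ =>
      (measurable_one.indicator hZ).comp (hμ.iterate k).measurable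
  calc μ {x | (visitCount T Z n x : ℝ) ≤ δ * n}ᶜ
      ≤ μ {x | ENNReal.ofReal (δ * n) ≤ visitCount T Z n x} := measure_mono fun x hx => by
        have hlt : δ * n < visitCount T Z n x := not_le.1 hx
        exact (ENNReal.ofReal_le_ofReal hlt.le).trans_eq (ENNReal.ofReal_natCast _)
    _ ≤ (∫⁻ x, (visitCount T Z n x : ENNReal) ∂μ) / ENNReal.ofReal (δ * n) :=
      meas_ge_le_lintegral_div hmeas.aemeasurable (by simpa using hδn) ENNReal.ofReal_ne_top
    _ ≤ ENNReal.ofReal (n * (δ * δ)) / ENNReal.ofReal (δ * n) := by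
      rw [lintegral_visitCount hμ hZ, ENNReal.ofReal_mul (Nat.cast_nonneg n),
        ENNReal.ofReal_natCast]
      gcongr
    _ = ENNReal.ofReal δ := by
      rw [← ENNReal.ofReal_div_of_pos hδn]
      congr 1
      field_simp

theorem exists_one_sub_lt_measure_of_ae_eventually [IsProbabilityMeasure μ] {D : ℕ → Set X}
    (hD : ∀ᵐ x ∂μ, ∀ᶠ n in atTop, x ∈ D n) {δ : ENNReal} (hδ : δ ≠ 0) (n₀ : ℕ) :
    ∃ n ≥ n₀, 1 - δ < μ (D n) := by
  let E (N : ℕ) : Set X := {x | ∀ n ≥ N, x ∈ D n}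
  have hmono : Monotone E := fun _ _ hab _ hx n hn => hx n (hab.trans hn)
  have hunion : ∀ᵐ x ∂μ, x ∈ ⋃ N, E N := by
    filter_upwards [hD] with x hx
    exact mem_iUnion.2 (eventually_atTop.1 hx)
  have hlt : 1 - δ < ⨆ N, μ (E N) := by
    rw [← hmono.measure_iUnion]
    calc 1 - δ < 1 := ENNReal.sub_lt_self ENNReal.one_ne_top one_ne_zero hδ
      _ = μ univ := measure_univ.symm
      _ ≤ μ (⋃ N, E N) := measure_mono_ae (hunion.mono fun x hx _ => hx)
  obtain ⟨N, hN⟩ := lt_iSup_iff.1 hlt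
  exact ⟨max N n₀, le_max_right _ _,
    hN.trans_le (measure_mono fun x hx => hx _ (le_max_left _ _))⟩

theorem exists_finset_card_mul_le_measure_univ [IsFiniteMeasure μ] {ι : Type*} {B : ι → Set X}
    (hB : ∀ i, MeasurableSet (B i)) {c : ENNReal} (hc : c ≠ 0) (t : Set ι)
    (ht : ∀ i ∈ t, c ≤ μ (B i)) :
    ∃ u : Finset ι, ↑u ⊆ t ∧ u.card * c ≤ μ univ ∧ ∀ i ∈ t, ∃ j ∈ u, (B i ∩ B j).Nonempty := by
  obtain ⟨u, hut, hdisj, hu⟩ := Vitali.exists_disjoint_subfamily_covering_enlargement B t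
    (fun _ => 1) 2 one_lt_two (fun _ _ => zero_le_one) 1 (fun _ _ => le_rfl) fun i hi =>
      nonempty_of_measure_ne_zero (hc.bot_lt.trans_le (ht i hi)).ne'
  have hfin : u.Finite := by
    have hfin_univ : {i : u | c ≤ μ (B i)}.Finite :=
      Measure.finite_const_le_meas_of_disjoint_iUnion μ hc.bot_lt (fun i : u => hB i)
        (hdisj.on_injective Subtype.val_injective fun i => i.2) (measure_ne_top _ _)
    exact finite_univ_iff.1 (hfin_univ.subset fun i _ => ht i (hut i.2))
  lift u to Finset ι using hfin
  refine ⟨u, hut, ?_, fun i hi => (hu i hi).imp fun j hj => ⟨hj.1, hj.2.1⟩⟩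
  calc u.card * c = ∑ _i ∈ u, c := by rw [Finset.sum_const, nsmul_eq_mul]
    _ ≤ ∑ i ∈ u, μ (B i) := Finset.sum_le_sum fun i hi => ht i (hut hi)
    _ = μ (⋃ i ∈ u, B i) := (measure_biUnion_finset hdisj fun i _ => hB i).symm
    _ ≤ μ univ := measure_mono (subset_univ _)

end MeasureEstimates

section KatokCover

variable [MetricSpace X] [MeasurableSpace X] [BorelSpace X] {T : X → X}

theorem exists_isOpen_dynCoverable_measure_compl_le (hT : Continuous T) {μ : Measure X}
    [IsProbabilityMeasure μ] {ε s : ℝ} (hε : 0 < ε) (hs : ∀ᵐ x ∂μ, brinKatok T μ x ε < s)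
    {δ : ENNReal} (hδ : δ ≠ 0) (n₀ : ℕ) :
    ∃ n ≥ n₀, ∃ G, IsOpen G ∧ DynCoverable T n (4 * ε) G (Real.exp (s * n)) ∧ μ Gᶜ ≤ δ := by
  have hlarge : ∀ᵐ x ∂μ, ∀ᶠ n : ℕ in atTop,
      x ∈ {x | ENNReal.ofReal (Real.exp (-(s * n))) ≤ μ (dynBall T n x ε)} := by
    filter_upwards [hs] with x hx
    filter_upwards [eventually_lt_of_limsup_lt hx, eventually_gt_atTop 0] with n hxn hn
    exact (neg_log_div_natCast_le_iff hn _ s).1 hxn.le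
  obtain ⟨n, hn, hμ⟩ := exists_one_sub_lt_measure_of_ae_eventually hlarge hδ n₀
  obtain ⟨C, -, hcard, hC⟩ := exists_finset_card_mul_le_measure_univ (μ := μ)
    (fun x => (isOpen_dynBall hT n x hε).measurableSet)
    (ENNReal.ofReal_pos.2 (Real.exp_pos (-(s * n)))).ne' _ fun x hx => hx
  have hopen : IsOpen (⋃ c ∈ C, dynBall T n c (2 * ε)) :=
    isOpen_biUnion fun c _ => isOpen_dynBall hT n c (by positivity)
  refine ⟨n, hn, _, hopen, ?_, ?_⟩
  · rw [measure_univ, ← ENNReal.ofReal_natCast, ← ENNReal.ofReal_mul (Nat.cast_nonneg _),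
      ENNReal.ofReal_le_one, Real.exp_neg, ← div_eq_mul_inv, div_le_one (Real.exp_pos _)] at hcard
    rw [show 4 * ε = 2 * (2 * ε) by ring]
    exact (dynCoverable_biUnion_dynBall T n C (2 * ε)).mono subset_rfl hcard
  · rw [prob_compl_eq_one_sub hopen.measurableSet, tsub_le_iff_left, ← tsub_le_iff_right]
    refine hμ.le.trans (measure_mono fun x hx => ?_)
    obtain ⟨c, hc, z, hxz, hcz⟩ := hC x hx
    refine mem_iUnion₂.2 ⟨c, hc, ?_⟩
    calc dynDist T n c x ≤ dynDist T n c z + dynDist T n z x := dynDist_triangle T n c z x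
      _ < ε + ε := add_lt_add hcz (dynDist_comm T n z x ▸ hxz)
      _ = 2 * ε := (two_mul ε).symm

end KatokCover

section TileSystem

theorem sum_range_le_half_of_le_geometric {a : ℕ → ℝ} (ha : ∀ j, a j ≤ 1 / 4 * (1 / 2) ^ j)
    (m : ℕ) : ∑ j ∈ Finset.range m, a j ≤ 1 / 2 := by
  calc ∑ j ∈ Finset.range m, a j ≤ ∑ j ∈ Finset.range m, 1 / 4 * (1 / 2 : ℝ) ^ j :=
        Finset.sum_le_sum fun j _ => ha j
    _ ≤ 1 / 4 * 2 := by
      rw [← Finset.mul_sum]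
      gcongr
      exact (summable_geometric_two.sum_le_tsum _ fun j _ => by positivity).trans_eq
        tsum_geometric_two
    _ = 1 / 2 := by norm_num

theorem eventually_exp_neg_mul_natCast_le {η c : ℝ} (hη : 0 < η) (hc : 0 < c) :
    ∀ᶠ n : ℕ in atTop, Real.exp (-(η * n)) ≤ c :=
  (Real.tendsto_exp_neg_atTop_nhds_zero.comp
    (tendsto_natCast_atTop_atTop.const_mul_atTop hη)).eventually_le_const hc

theorem exists_seq_forall_exists_measure_compl_lt [TopologicalSpace X] [CompactSpace X]
    [TopologicalSpace.MetrizableSpace X] [MeasurableSpace X] [BorelSpace X]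
    {S : Set (ProbabilityMeasure X)} (hS : S.Nonempty) {P : Set X → Prop} {δ : ENNReal}
    (hP : ∀ μ ∈ S, ∃ G, IsOpen G ∧ P G ∧ (μ : Measure X) Gᶜ < δ) :
    ∃ G : ℕ → Set X, (∀ j, IsOpen (G j) ∧ P (G j)) ∧
      ∀ μ ∈ S, ∃ j, (μ : Measure X) (G j)ᶜ < δ := by
  let := TopologicalSpace.metrizableSpaceMetric X
  let := TopologicalSpace.metrizableSpaceMetric (ProbabilityMeasure X)
  let V (G : Set X) : Set (ProbabilityMeasure X) := {μ | (μ : Measure X) Gᶜ < δ}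
  obtain ⟨C, hC, hcount, hunion⟩ :=
    TopologicalSpace.isOpen_biUnion_countable {G | IsOpen G ∧ P G} V fun G hG =>
      (upperSemicontinuous_toMeasure_apply hG.1.isClosed_compl).isOpen_preimage δ
  have hcover : ∀ μ ∈ S, ∃ G ∈ C, (μ : Measure X) Gᶜ < δ := fun μ hμ => by
    obtain ⟨G, hGo, hGP, hμG⟩ := hP μ hμ
    have hmem : μ ∈ ⋃ G ∈ C, V G := hunion ▸ mem_biUnion (x := G) ⟨hGo, hGP⟩ hμG
    simpa [V] using hmem
  obtain ⟨μ, hμ⟩ := hS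
  obtain ⟨G, hG, -⟩ := hcover μ hμ
  obtain ⟨f, rfl⟩ := hcount.exists_eq_range ⟨G, hG⟩
  exact ⟨f, fun j => hC (mem_range_self j), fun ν hν => by simpa using hcover ν hν⟩

variable [MetricSpace X] [MeasurableSpace X] [BorelSpace X] {T : X → X} {ρ ε δ η s t M : ℝ}

theorem exists_isOpen_dynCoverable_forall_measure_compl_le (hT : Continuous T) (hM : 1 ≤ M)
    (hs : 0 ≤ s) (hη : 0 < η) (hδ : 0 < δ) (h1 : DynCoverable T 1 ρ univ M) {G : Set X}
    (hGo : IsOpen G) {n : ℕ} (hn : Real.exp (-(η * n)) ≤ 1 / 2)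
    (hG : DynCoverable T n ρ G (Real.exp (s * n))) {c : ℝ} (hc : 0 < c) :
    ∃ (ℓ : ℕ) (W : Set X), 1 ≤ ℓ ∧ Real.exp (-(η * ℓ)) ≤ c ∧ IsOpen W ∧
      DynCoverable T ℓ ρ W (Real.exp ((s + 2 * η + δ * Real.log (2 * M)) * ℓ)) ∧
      ∀ μ : Measure X, MeasurePreserving T μ μ → μ Gᶜ ≤ ENNReal.ofReal (δ * δ) →
        μ Wᶜ ≤ ENNReal.ofReal δ := by
  obtain ⟨ℓ, hℓ, hexp, hW⟩ := ((eventually_ge_atTop 1).and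
    ((eventually_exp_neg_mul_natCast_le hη hc).and
      (DynCoverable.eventually_setOf_visitCount_le_mul hM hs hη hδ.le h1 hn hG))).exists
  refine ⟨ℓ, _, hℓ, hexp, ?_, hW, fun μ hμ hμG => measure_compl_setOf_visitCount_le hμ
    hGo.measurableSet.compl (Nat.one_le_iff_ne_zero.1 hℓ) hδ hμG⟩
  simpa only [Nat.le_floor_iff (show 0 ≤ δ * ℓ by positivity)] using
    isOpen_setOf_visitCount_le hT hGo.isClosed_compl ℓ ⌊δ * ℓ⌋₊

variable [CompactSpace X]

theorem sepEnt_univ_le_of_forall_exists_measure_compl_lt {ℓ : ℕ → ℕ} {W : ℕ → Set X} {r : ℕ → ℝ}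
    (hT : Continuous T) (hρ : 0 ≤ ρ) (hδ : 0 ≤ δ) (ht : 0 ≤ t) (hM : 1 ≤ M)
    (h1 : DynCoverable T 1 ρ univ M) (hℓ : ∀ j, 1 ≤ ℓ j) (hWo : ∀ j, IsOpen (W j))
    (hW : ∀ j, DynCoverable T (ℓ j) ρ (W j) (r j))
    (hkraft : ∀ m, ∑ j ∈ Finset.range m, r j * Real.exp (-(t * ℓ j)) ≤ 1 / 2)
    (hμ : ∀ μ ∈ ergodicMeasures T, ∃ j, μ (W j)ᶜ < ENNReal.ofReal δ) :
    sepEnt T univ ρ ≤ (t + δ * Real.log (2 * M) : ℝ) := by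
  let Z (m : ℕ) : Set X := (⋃ j ∈ Finset.range m, W j)ᶜ
  have hZ : Antitone Z := fun a b hab =>
    compl_subset_compl.2 (biUnion_subset_biUnion_left (Finset.range_mono hab))
  have hZc (m : ℕ) : IsClosed (Z m) := (isOpen_biUnion fun j _ => hWo j).isClosed_compl
  have hZμ : ∀ μ ∈ ergodicMeasures T, μ (⋂ m, Z m) < ENNReal.ofReal δ := fun μ hμT => by
    obtain ⟨j, hj⟩ := hμ μ hμT
    have hsub : ⋂ m, Z m ⊆ (W j)ᶜ := (iInter_subset Z (j + 1)).trans <| compl_subset_compl.2 <|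
      subset_biUnion_of_mem (u := W) (Finset.mem_coe.2 (Finset.self_mem_range_succ j))
    exact (measure_mono hsub).trans_lt hj
  obtain ⟨m, hm⟩ := exists_forall_visitCount_lt hT hZ hZc hZμ
  obtain ⟨A, hA, hcover⟩ := DynCoverable.exists_setOf_visitCount_le_mul hM ht hδ h1
    (Finset.range m) (fun j _ => hℓ j) (fun j _ => hW j) (hkraft m)
  have hlog : 0 ≤ Real.log (2 * M) := Real.log_nonneg (by linarith)
  refine sepEnt_univ_le_of_dynCoverable hρ hA (by positivity) ?_
  filter_upwards [eventually_gt_atTop m] with N hN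
  exact (hcover N).mono (fun x _ => (hm N hN x).le) le_rfl

variable [Nonempty X]

theorem exists_seq_dynCoverable_measure_compl_lt (hT : Continuous T) (hε : 0 < ε)
    (hs : supBrinKatok T ε < s) {δ : ENNReal} (hδ : 0 < δ) (n₀ : ℕ) :
    ∃ G : ℕ → Set X,
      (∀ j, IsOpen (G j) ∧ ∃ n ≥ n₀, DynCoverable T n (4 * ε) (G j) (Real.exp (s * n))) ∧
      ∀ μ ∈ ergodicMeasures T, ∃ j, μ (G j)ᶜ < δ := by
  have hne : {μ : ProbabilityMeasure X | (μ : Measure X) ∈ ergodicMeasures T}.Nonempty := by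
    obtain ⟨μ, hμ⟩ := ergodicMeasures_nonempty hT
    exact ⟨⟨μ, hμ.1⟩, hμ⟩
  obtain ⟨G, hG, hμG⟩ := exists_seq_forall_exists_measure_compl_lt hne (δ := δ)
    (P := fun G => ∃ n ≥ n₀, DynCoverable T n (4 * ε) G (Real.exp (s * n))) fun μ hμ => by
      obtain ⟨δ', hδ'0, hδ'⟩ := exists_between hδ
      obtain ⟨n, hn, G, hGo, hG, hμG⟩ := exists_isOpen_dynCoverable_measure_compl_le hT hε
        (ae_brinKatok_lt_of_supBrinKatok_lt hs hμ) hδ'0.ne' n₀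
      exact ⟨G, hGo, ⟨n, hn, hG⟩, hμG.trans_lt hδ'⟩
  exact ⟨G, hG, fun μ hμ => hμG ⟨μ, hμ.1⟩ hμ⟩

theorem sepEnt_univ_le_add (hT : Continuous T) (hε : 0 < ε) (hη : 0 < η)
    (hs : supBrinKatok T ε < s) : sepEnt T univ (4 * ε) ≤ (s + 6 * η : ℝ) := by
  have hs0 : 0 ≤ s := mod_cast (supBrinKatok_nonneg (ergodicMeasures_nonempty hT) ε).trans hs.le
  obtain ⟨M, hM, h1⟩ := DynCoverable.exists_univ_one T (show 0 < 4 * ε by positivity)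
  have hlog : 0 < Real.log (2 * M) := Real.log_pos (by linarith)
  obtain ⟨δ, hδ, hδlog⟩ : ∃ δ > 0, δ * Real.log (2 * M) = η :=
    ⟨η / Real.log (2 * M), by positivity, div_mul_cancel₀ _ hlog.ne'⟩
  obtain ⟨n₀, hn₀⟩ :=
    eventually_atTop.1 (eventually_exp_neg_mul_natCast_le hη (one_half_pos (α := ℝ)))
  obtain ⟨G, hG, hμG⟩ := exists_seq_dynCoverable_measure_compl_lt hT hε hs
    (ENNReal.ofReal_pos.2 (mul_pos hδ hδ)) n₀
  choose hGo n hn hGn using hG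
  choose ℓ W hℓ hexp hWo hW hμW using fun j =>
    exists_isOpen_dynCoverable_forall_measure_compl_le hT hM hs0 hη hδ h1 (hGo j)
      (hn₀ (n j) (hn j)) (hGn j) (c := 1 / 4 * (1 / 2) ^ j) (by positivity)
  have hkraft := sum_range_le_half_of_le_geometric
    (a := fun j => Real.exp ((s + 2 * η + δ * Real.log (2 * M)) * ℓ j) *
      Real.exp (-((s + 4 * η) * ℓ j))) fun j => by
    rw [← Real.exp_add, hδlog]
    exact (congrArg Real.exp (by ring)).trans_le (hexp j)
  refine (sepEnt_univ_le_of_forall_exists_measure_compl_lt (δ := 2 * δ) hT (by positivity)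
    (by positivity) (by positivity) hM h1 hℓ hWo hW hkraft fun μ hμ => ?_).trans_eq ?_
  · obtain ⟨j, hj⟩ := hμG μ hμ
    refine ⟨j, (hμW j μ hμ.2.toMeasurePreserving hj.le).trans_lt ?_⟩
    exact (ENNReal.ofReal_lt_ofReal_iff (by positivity)).2 (by linarith)
  · rw [mul_assoc, hδlog]
    norm_num [add_assoc, ← add_mul]

theorem sepEnt_univ_le_supBrinKatok (hT : Continuous T) (hε : 0 < ε) :
    sepEnt T univ (4 * ε) ≤ supBrinKatok T ε := by
  refine EReal.le_of_forall_lt_iff_le.1 fun z hz => ?_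
  obtain ⟨s, hs, hsz⟩ := EReal.lt_iff_exists_real_btwn.1 hz
  have hη : 0 < (z - s) / 6 := div_pos (sub_pos.2 (mod_cast hsz)) (by norm_num)
  refine (sepEnt_univ_le_add hT hε hη hs).trans_eq ?_
  rw [mul_div_cancel₀ _ (by norm_num), add_sub_cancel]

end TileSystem

section ScaleChange

theorem tendsto_log_one_div_nhdsGT_zero :
    Tendsto (fun ε : ℝ => Real.log (1 / ε)) (𝓝[>] 0) atTop := by
  simpa only [one_div, Function.comp_def] using Real.tendsto_log_atTop.comp tendsto_inv_nhdsGT_zero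

theorem tendsto_const_mul_nhdsGT_zero {c : ℝ} (hc : 0 < c) :
    Tendsto (fun ε : ℝ => c * ε) (𝓝[>] 0) (𝓝[>] 0) := by
  refine tendsto_nhdsWithin_iff.2 ⟨?_, ?_⟩
  · simpa using ((continuous_const_mul c).tendsto 0).mono_left nhdsWithin_le_nhds
  · filter_upwards [self_mem_nhdsWithin] with ε hε
    exact mul_pos hc hε

theorem eventually_log_one_div_mul_le {a z c : ℝ} (haz : a < z) (hc : 0 < c) :
    ∀ᶠ ε : ℝ in 𝓝[>] 0, Real.log (1 / (c * ε)) * a ≤ Real.log (1 / ε) * z := by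
  filter_upwards [self_mem_nhdsWithin,
    tendsto_log_one_div_nhdsGT_zero.eventually_ge_atTop (-(a * Real.log c) / (z - a))] with ε hε h
  rw [div_le_iff₀ (sub_pos.2 haz)] at h
  rw [one_div, mul_inv, Real.log_mul (inv_ne_zero hc.ne') (inv_ne_zero (ne_of_gt hε)),
    Real.log_inv, ← one_div]
  linarith

theorem limsup_div_log_le_of_le_const_mul {f g : ℝ → EReal} {c : ℝ} (hc : 0 < c)
    (hfg : ∀ ε > 0, f ε ≤ g (c * ε)) :
    limsup (fun ε : ℝ => f ε / ((Real.log (1 / ε) : ℝ) : EReal)) (𝓝[>] 0) ≤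
      limsup (fun ε : ℝ => g ε / ((Real.log (1 / ε) : ℝ) : EReal)) (𝓝[>] 0) := by
  have hlog : ∀ᶠ ε : ℝ in 𝓝[>] 0, (0 : EReal) < (Real.log (1 / ε) : ℝ) :=
    (tendsto_log_one_div_nhdsGT_zero.eventually_gt_atTop 0).mono fun ε h => mod_cast h
  refine EReal.le_of_forall_lt_iff_le.1 fun z hz => ?_
  obtain ⟨a, hga, haz⟩ := EReal.lt_iff_exists_real_btwn.1 hz
  refine limsup_le_of_le (by isBoundedDefault) ?_
  filter_upwards [self_mem_nhdsWithin, hlog, (tendsto_const_mul_nhdsGT_zero hc).eventually hlog,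
    (tendsto_const_mul_nhdsGT_zero hc).eventually (eventually_lt_of_limsup_lt hga),
    eventually_log_one_div_mul_le (mod_cast haz) hc] with ε hε hlogε hlogcε hgε haε
  rw [EReal.div_le_iff_le_mul hlogε (EReal.coe_ne_top _)]
  calc f ε ≤ g (c * ε) := hfg ε hε
    _ ≤ (Real.log (1 / (c * ε)) : ℝ) * (a : EReal) :=
      (EReal.div_le_iff_le_mul hlogcε (EReal.coe_ne_top _)).1 hgε.le
    _ ≤ (Real.log (1 / ε) : ℝ) * (z : EReal) := mod_cast haε

end ScaleChange

theorem upper_mdim_eq_limsup_brinKatok_general [MetricSpace X] [CompactSpace X] [Nonempty X]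
    [MeasurableSpace X] [BorelSpace X] (T : X → X) (hT : Continuous T) :
    mdimUpper T = limsup (fun ε : ℝ => supBrinKatok T ε / ((Real.log (1 / ε) : ℝ) : EReal))
      (𝓝[>] (0:ℝ)) := by
  refine le_antisymm ?_ ?_
  · refine limsup_div_log_le_of_le_const_mul (c := 1 / 4) (by norm_num) fun ε hε => ?_
    have h := sepEnt_univ_le_supBrinKatok hT (show 0 < 1 / 4 * ε by positivity)
    rwa [show 4 * (1 / 4 * ε) = ε by ring] at h
  · refine limsup_div_log_le_of_le_const_mul (c := 1 / 3) (by norm_num) fun ε hε => ?_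
    exact supBrinKatok_le_sepEnt T (by positivity) (by linarith)

section Theorems

variable [MetricSpace X] [CompactSpace X] [Nonempty X] [MeasurableSpace X] [BorelSpace X]

/-- Variational principle for the upper metric mean dimension in terms of Brin-Katok
local entropy, where `h_μ^{BK}(ε)` is the μ-essential supremum of `x ↦ h_μ^{BK}(x, ε)`
(Theorem 5.2, first part). -/
theorem upper_mdim_eq_limsup_brinKatok (T : X → X) (hT : IsHomeomorph T) :
    mdimUpper T = limsup (fun ε : ℝ =>
      (⨆ μ ∈ ergodicMeasures T, essSup (fun x => brinKatok T μ x ε) μ)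
        / ((Real.log (1 / ε) : ℝ) : EReal)) (𝓝[>] (0:ℝ)) := by
  exact upper_mdim_eq_limsup_brinKatok_general T hT.continuous

end Theorems
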